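/- Let α ⪰ ω be lattice paths from (0,0) to (n,r) and let μ be a monomial such that the symmetric exchange graph G(μ) of Γ(α,ω) is nonempty. Then G(μ) has exactly one thin vertex: there is a unique multiset V = {σ_1, …, σ_t} of paths between α and ω with m(σ_1)⋯m(σ_t) = μ such that any two paths in V are comparable under ⪰ and, for each i, the i-th east steps of any two paths in V are at most a unit length apart. -/

import Mathlib

/-- A lattice path from `(0,0)` to `(n,r)`, encoded by the set of positions of
its north steps among its `n + r` steps. -/
def IsLatticePath (n r : ℕ) (σ : Finset ℕ) : Prop :=
  σ ⊆ Finset.Icc 1 (n + r) ∧ σ.card = r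

/-- `σ ⪰ τ`: each element of `N(σ)`, in increasing order, is at most the
corresponding element of `N(τ)`. -/
def PathAbove (σ τ : Finset ℕ) : Prop :=
  ∀ k (h1 : k < (σ.sort (· ≤ ·)).length) (h2 : k < (τ.sort (· ≤ ·)).length),
    (σ.sort (· ≤ ·)).get ⟨k, h1⟩ ≤ (τ.sort (· ≤ ·)).get ⟨k, h2⟩

/-- The number of east steps of `σ` before position `a`. -/
def eastBefore (σ : Finset ℕ) (a : ℕ) : ℕ :=
  ((Finset.Icc 1 (a - 1)).filter (fun b => b ∉ σ)).card

/-- The monomial `m(σ)` of a lattice path: the exponent of `x_i` is the number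
of north steps of `σ` along the line `x = i`. -/
noncomputable def pathMonomial (σ : Finset ℕ) : ℕ →₀ ℕ :=
  ∑ a ∈ σ, Finsupp.single (eastBefore σ a) 1

/-- The bases of the lattice path polymatroid `Γ(α, ω)`: the monomials `m(σ)`
for lattice paths `σ` with `α ⪰ σ ⪰ ω`. -/
def IsLPBasis (n r : ℕ) (α ω : Finset ℕ) (m : ℕ →₀ ℕ) : Prop :=
  ∃ σ : Finset ℕ, IsLatticePath n r σ ∧ PathAbove α σ ∧ PathAbove σ ω ∧ m = pathMonomial σ
/-- The height of the `k`-th east step of `σ` (0-indexed): if the east steps of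
`σ` occur at positions `a_0 < a_1 < ⋯`, the `k`-th east step has height
`a_k - (k + 1)`. -/
def eastHeight (n r : ℕ) (σ : Finset ℕ) (k : ℕ) : ℕ :=
  (((Finset.Icc 1 (n + r)) \ σ).sort (· ≤ ·)).getD k 0 - (k + 1)

/-- A vertex (multiset of paths) is thin if its paths are pairwise comparable
under `⪰` and the corresponding east steps of any two of its paths are at most
a unit length apart. -/
def ThinV (n r : ℕ) (V : Multiset (Finset ℕ)) : Prop :=
  (∀ σ ∈ V, ∀ τ ∈ V, PathAbove σ τ ∨ PathAbove τ σ) ∧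
  (∀ σ ∈ V, ∀ τ ∈ V, ∀ k < n, eastHeight n r σ k ≤ eastHeight n r τ k + 1)

/-!
A lattice path is the same thing as its height function `h`, where `h k` is the number of north
steps on the lines `x = 0, …, k`: these are exactly the monotone functions with value `r` from `n`
on. Under this dictionary `⪰` becomes the pointwise order, multiplication of monomials becomes
addition of height functions, and the height of the `k`-th east step becomes `h k`.

If `t` functions form a chain, differ by at most one at each point and have sum `S`, then at each
point `k` they must be, in increasing order, `(S k + j) / t` for `j < t`, since this is the only
sorted way to write `S k` as a sum of `t` nearly equal integers. This gives uniqueness, as the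
number `t` of paths is determined by `S n = t * r`. Conversely these `t` functions have sum `S` by
Hermite's identity, are monotone if `S` is, and lie between any two functions `a` and `b` with
`t * a ≤ S ≤ t * b`; hence they are height functions of paths between `α` and `ω`.
-/

open Finset

/-! ### Leveling a multiset of functions -/

section Leveling

variable {ι : Type*}

theorem exists_monotone_map_univ_eq {X : Type*} [PartialOrder X] {V : Multiset X}
    (hV : ∀ x ∈ V, ∀ y ∈ V, x ≤ y ∨ y ≤ x) :
    ∃ (t : ℕ) (g : Fin t → X), Monotone g ∧ univ.val.map g = V := by
  classical
  obtain ⟨s, _, le_imp_s⟩ := extend_partialOrder ((· ≤ ·) : X → X → Prop)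
  have hmem (i) : (V.sort s).get i ∈ V := (Multiset.mem_sort s).1 (List.get_mem _ i)
  refine ⟨_, (V.sort s).get, fun i j hij => ?_, ?_⟩
  · rcases hij.eq_or_lt with rfl | hlt
    · exact le_rfl
    · have hs := List.pairwise_iff_get.1 (V.pairwise_sort s) i j hlt
      rcases hV _ (hmem i) _ (hmem j) with h | h
      · exact h
      · exact (antisymm_of s hs (le_imp_s _ _ h)).le
  · rw [Fin.univ_val_map, List.ofFn_get, Multiset.sort_eq]

theorem sum_range_add_div (S : ℕ) {t : ℕ} (ht : 0 < t) : ∑ j ∈ range t, (S + j) / t = S := by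
  induction S with
  | zero => exact sum_eq_zero fun j hj => by simpa using Nat.div_eq_of_lt (mem_range.1 hj)
  | succ S ih =>
    have shift := (sum_range_succ (fun j => (S + j) / t) t).symm.trans
      (sum_range_succ' (fun j => (S + j) / t) t)
    rw [ih, Nat.add_div_right _ ht, add_zero] at shift
    simp only [add_right_comm S 1, add_assoc S]
    omega

theorem eq_sum_add_div_of_monotone_of_le_add_one {t : ℕ} {g : Fin t → ℕ} (hg : Monotone g)
    (hlevel : ∀ i j, g i ≤ g j + 1) (j : Fin t) : g j = (∑ i, g i + j) / t := by
  have lower : t * g j ≤ ∑ i, g i + j := by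
    have hle : ∀ i, g j ≤ g i + if i < j then 1 else 0 := fun i => by
      split_ifs with h
      · exact hlevel j i
      · exact hg (not_lt.1 h)
    simpa [sum_add_distrib, ← card_filter, filter_gt_eq_Iio] using
      sum_le_sum fun i (_ : i ∈ univ) => hle i
  have upper : ∑ i, g i + (j + 1) ≤ t * (g j + 1) := by
    have hle : ∀ i, g i + (if i ≤ j then 1 else 0) ≤ g j + 1 := fun i => by
      split_ifs with h
      · exact Nat.succ_le_succ (hg h)
      · exact hlevel i j
    simpa [sum_add_distrib, ← card_filter, filter_ge_eq_Iic] using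
      sum_le_sum fun i (_ : i ∈ univ) => hle i
  exact (Nat.div_eq_of_lt_le (by rwa [mul_comm]) (by rw [mul_comm]; omega)).symm

/-- Thinness of a multiset of functions: they form a chain for the pointwise order, and any two of
them differ by at most one at each point. It corresponds to `ThinV` via height functions. -/
def IsThin (F : Multiset (ι → ℕ)) : Prop :=
  (∀ f ∈ F, ∀ g ∈ F, f ≤ g ∨ g ≤ f) ∧ ∀ f ∈ F, ∀ g ∈ F, ∀ i, f i ≤ g i + 1

/-- The leveling of a multiset `F` of `t` functions with sum `S`: the functions `(S + j) / t` for
`j < t`. It is the thin multiset with the same cardinality and the same sum as `F`. -/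
def leveling (F : Multiset (ι → ℕ)) : Multiset (ι → ℕ) :=
  (Multiset.range F.card).map fun j i => (F.sum i + j) / F.card

variable {F : Multiset (ι → ℕ)} {f : ι → ℕ}

theorem mem_leveling : f ∈ leveling F ↔ ∃ j < F.card, (fun i => (F.sum i + j) / F.card) = f := by
  simp [leveling]

theorem leveling_congr {G : Multiset (ι → ℕ)} (hcard : F.card = G.card) (hsum : F.sum = G.sum) :
    leveling F = leveling G := by
  rw [leveling, hcard, hsum, leveling]

theorem sum_leveling (F : Multiset (ι → ℕ)) : (leveling F).sum = F.sum := by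
  rcases F.card.eq_zero_or_pos with h | h
  · rw [Multiset.card_eq_zero.1 h]
    rfl
  · ext i
    rw [Pi.multiset_sum_apply, leveling, Multiset.map_map]
    exact sum_range_add_div (F.sum i) h

theorem isThin_leveling (F : Multiset (ι → ℕ)) : IsThin (leveling F) := by
  refine ⟨fun f hf g hg => ?_, fun f hf g hg i => ?_⟩ <;>
    obtain ⟨a, ha, rfl⟩ := mem_leveling.1 hf <;> obtain ⟨b, hb, rfl⟩ := mem_leveling.1 hg
  · exact (le_total a b).imp (fun h i => by dsimp only; gcongr) fun h i => by dsimp only; gcongr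
  · rw [← Nat.add_div_right _ (by omega)]
    exact Nat.div_le_div_right (by omega)

theorem IsThin.leveling_eq (hF : IsThin F) : leveling F = F := by
  obtain ⟨t, g, hg, rfl⟩ := exists_monotone_map_univ_eq hF.1
  have mem_map (j) : g j ∈ univ.val.map g := Multiset.mem_map_of_mem g (mem_univ j)
  have hdiv (j : Fin t) : (fun i => ((∑ a, g a) i + j) / t) = g j := by
    ext i
    rw [Finset.sum_apply]
    exact Eq.symm <| eq_sum_add_div_of_monotone_of_le_add_one (fun _ _ hab => hg hab i)
      (fun a b => hF.2 _ (mem_map a) _ (mem_map b) i) j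
  have hrange : Multiset.range t = univ.val.map ((↑) : Fin t → ℕ) := by
    rw [Fin.univ_val_map, List.ofFn_eq_map, List.map_coe_finRange_eq_range, Multiset.coe_range]
  have hcard : (univ.val.map g).card = t := by simp
  rw [leveling, hcard, hrange, Multiset.map_map]
  exact Multiset.map_congr rfl fun j _ => hdiv j

theorem ge_of_mem_leveling {i : ι} {a : ℕ} (ha : ∀ g ∈ F, a ≤ g i) (hf : f ∈ leveling F) :
    a ≤ f i := by
  obtain ⟨j, hj, rfl⟩ := mem_leveling.1 hf
  have hsum : F.card * a ≤ F.sum i := by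
    simpa [Pi.multiset_sum_apply] using
      Multiset.card_nsmul_le_sum (s := F.map (· i)) (Multiset.forall_mem_map_iff.2 ha)
  rw [Nat.le_div_iff_mul_le (by omega), mul_comm]
  omega

theorem le_of_mem_leveling {i : ι} {b : ℕ} (hb : ∀ g ∈ F, g i ≤ b) (hf : f ∈ leveling F) :
    f i ≤ b := by
  obtain ⟨j, hj, rfl⟩ := mem_leveling.1 hf
  have hsum : F.sum i ≤ F.card * b := by
    simpa [Pi.multiset_sum_apply] using
      Multiset.sum_le_card_nsmul (F.map (· i)) b (Multiset.forall_mem_map_iff.2 hb)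
  rw [← Nat.lt_succ_iff, Nat.div_lt_iff_lt_mul (by omega), Nat.succ_mul, mul_comm]
  omega

theorem monotone_of_mem_leveling [Preorder ι] (hF : ∀ g ∈ F, Monotone g) (hf : f ∈ leveling F) :
    Monotone f := by
  obtain ⟨j, -, rfl⟩ := mem_leveling.1 hf
  have hsum : Monotone F.sum :=
    Multiset.sum_induction Monotone F (fun _ _ => Monotone.add) monotone_const hF
  exact fun a b hab => Nat.div_le_div_right (Nat.add_le_add_right (hsum hab) j)

end Leveling

/-! ### Height functions of lattice paths -/

section OrderEmbOfFin

variable {X : Type*} [LinearOrder X] {s : Finset X} {c : ℕ}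

theorem card_filter_eq_card_filter_orderEmbOfFin (hs : #s = c) (p : X → Prop) [DecidablePred p] :
    #{a ∈ s | p a} = #{i | p (s.orderEmbOfFin hs i)} := by
  conv_lhs => rw [← map_orderEmbOfFin_univ s hs, filter_map, card_map]
  rfl

theorem card_filter_lt_orderEmbOfFin (hs : #s = c) (j : Fin c) :
    #{a ∈ s | a < s.orderEmbOfFin hs j} = j := by
  simp [card_filter_eq_card_filter_orderEmbOfFin hs, filter_gt_eq_Iio]

theorem lt_card_filter_iff (hs : #s = c) {p : X → Prop} [DecidablePred p] (hp : Antitone p)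
    (j : Fin c) : (j : ℕ) < #{a ∈ s | p a} ↔ p (s.orderEmbOfFin hs j) := by
  have hanti {i k : Fin c} (hik : i ≤ k) (hk : p (s.orderEmbOfFin hs k)) :
      p (s.orderEmbOfFin hs i) := hp ((s.orderEmbOfFin hs).monotone hik) hk
  rw [card_filter_eq_card_filter_orderEmbOfFin hs]
  refine ⟨fun h => ?_, fun h => ?_⟩
  · by_contra hj
    have hsub : ({i | p (s.orderEmbOfFin hs i)} : Finset (Fin c)) ⊆ Iio j := fun i hi =>
      mem_Iio.2 <| not_le.1 fun hji => hj (hanti hji (mem_filter.1 hi).2)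
    simpa using h.trans_le (card_le_card hsub)
  · have hsub : Iic j ⊆ ({i | p (s.orderEmbOfFin hs i)} : Finset (Fin c)) := fun i hi =>
      mem_filter.2 ⟨mem_univ i, hanti (mem_Iic.1 hi) h⟩
    simpa using card_le_card hsub

end OrderEmbOfFin

/-- The sequence `k ↦ m 0 + ⋯ + m k` of partial sums of the exponents of a monomial. -/
def partialSums : (ℕ →₀ ℕ) →+ (ℕ → ℕ) where
  toFun m k := ∑ i ∈ range (k + 1), m i
  map_zero' := by ext; simp
  map_add' a b := by ext; simp [sum_add_distrib]

theorem partialSums_injective : Function.Injective partialSums := by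
  intro a b h
  have hsum : ∀ k, ∑ i ∈ range k, a i = ∑ i ∈ range k, b i
    | 0 => rfl
    | k + 1 => congrFun h k
  ext i
  have := hsum (i + 1)
  rwa [sum_range_succ, sum_range_succ, hsum i, Nat.add_left_cancel_iff] at this

theorem monotone_partialSums (m : ℕ →₀ ℕ) : Monotone (partialSums m) := fun _ _ hab =>
  sum_le_sum_of_subset (range_mono (Nat.succ_le_succ hab))

/-- The height function of a lattice path: `pathHeight σ k` is the number of north steps of `σ` on
the lines `x = 0, …, k`, that is, the height at which `σ` leaves the line `x = k`. -/
noncomputable def pathHeight (σ : Finset ℕ) : ℕ → ℕ := partialSums (pathMonomial σ)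

theorem pathHeight_eq_card (σ : Finset ℕ) (k : ℕ) :
    pathHeight σ k = #{a ∈ σ | eastBefore σ a ≤ k} := by
  change ∑ i ∈ range (k + 1), (∑ a ∈ σ, Finsupp.single (eastBefore σ a) 1) i = _
  simp only [Finsupp.finsetSum_apply, Finsupp.single_apply]
  rw [sum_comm, card_filter]
  simp only [sum_ite_eq, mem_range, Nat.lt_succ_iff]

theorem sum_map_pathHeight (V : Multiset (Finset ℕ)) :
    (V.map pathHeight).sum = partialSums (V.map pathMonomial).sum := by
  rw [map_multiset_sum, Multiset.map_map]
  rfl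

theorem eastBefore_mono (σ : Finset ℕ) : Monotone (eastBefore σ) := fun _ _ hab =>
  card_le_card (filter_subset_filter _ (Icc_subset_Icc le_rfl (Nat.sub_le_sub_right hab 1)))

theorem eastBefore_lt_eastBefore {σ : Finset ℕ} {e a : ℕ} (he : e ∉ σ) (he' : 1 ≤ e)
    (hea : e < a) : eastBefore σ e < eastBefore σ a := by
  refine card_lt_card ((ssubset_iff_of_subset ?_).2 ⟨e, ?_, ?_⟩)
  · exact filter_subset_filter _ (Icc_subset_Icc le_rfl (by omega))
  · exact mem_filter.2 ⟨mem_Icc.2 (by omega), he⟩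
  · simp only [mem_filter, mem_Icc]
    omega

theorem eastBefore_add_card_filter_lt {σ : Finset ℕ} (hσ : 0 ∉ σ) {a : ℕ} (ha : 1 ≤ a) :
    eastBefore σ a + #{b ∈ σ | b < a} + 1 = a := by
  have hnorth : {b ∈ σ | b < a} = {b ∈ Icc 1 (a - 1) | b ∈ σ} := by
    ext b
    have : b ∈ σ → b ≠ 0 := fun hb => ne_of_mem_of_not_mem hb hσ
    simp only [mem_filter, mem_Icc]
    grind
  have := card_filter_add_card_filter_not (s := Icc 1 (a - 1)) (· ∈ σ)
  rw [Nat.card_Icc, ← hnorth] at this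
  unfold eastBefore
  omega

theorem pathHeight_eastBefore {σ : Finset ℕ} {e : ℕ} (he : e ∉ σ) (he' : 1 ≤ e) :
    pathHeight σ (eastBefore σ e) = #{a ∈ σ | a < e} := by
  rw [pathHeight_eq_card]
  congr 1
  refine filter_congr fun a ha => ⟨fun h => ?_, fun h => eastBefore_mono σ h.le⟩
  have hne : a ≠ e := ne_of_mem_of_not_mem ha he
  by_contra hlt
  exact (eastBefore_lt_eastBefore he he' (by omega : e < a)).not_ge h

/-- The functions that are height functions of lattice paths from `(0,0)` to `(n,r)`. The value `r`
from `n` on encodes that every path ends on the line `x = n`. -/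
def IsHeightFunction (n r : ℕ) (f : ℕ → ℕ) : Prop :=
  Monotone f ∧ ∀ k, n ≤ k → f k = r

/-- The lattice path with height function `f`: its `k`-th east step (counted from `0`) is preceded
by `f k` north steps and `k` east steps, hence has position `f k + k + 1`. -/
def pathOfHeight (n r : ℕ) (f : ℕ → ℕ) : Finset ℕ :=
  Icc 1 (n + r) \ (range n).image fun k => f k + k + 1

section LatticePaths

variable {n r : ℕ} {σ τ α ω : Finset ℕ} {f : ℕ → ℕ}

theorem IsHeightFunction.le (hf : IsHeightFunction n r f) (k : ℕ) : f k ≤ r :=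
  (hf.1 (le_max_left k n)).trans_eq (hf.2 _ (le_max_right k n))

namespace IsLatticePath

theorem zero_notMem (hσ : IsLatticePath n r σ) : 0 ∉ σ := fun h => by
  simpa using hσ.1 h

theorem card_Icc_sdiff (hσ : IsLatticePath n r σ) : #(Icc 1 (n + r) \ σ) = n := by
  rw [card_sdiff_of_subset hσ.1, hσ.2, Nat.card_Icc]
  omega

theorem pathHeight_of_le (hσ : IsLatticePath n r σ) {k : ℕ} (hk : n ≤ k) : pathHeight σ k = r := by
  rw [pathHeight_eq_card, filter_true_of_mem, hσ.2]
  intro a ha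
  have hsub : {b ∈ Icc 1 (a - 1) | b ∉ σ} ⊆ Icc 1 (n + r) \ σ := by
    have := mem_Icc.1 (hσ.1 ha)
    intro b hb
    simp only [mem_filter, mem_Icc, mem_sdiff] at hb ⊢
    exact ⟨by omega, hb.2⟩
  exact ((card_le_card hsub).trans_eq hσ.card_Icc_sdiff).trans hk

theorem isHeightFunction_pathHeight (hσ : IsLatticePath n r σ) :
    IsHeightFunction n r (pathHeight σ) :=
  ⟨monotone_partialSums _, fun _ => hσ.pathHeight_of_le⟩

theorem orderEmbOfFin_north (hσ : IsLatticePath n r σ) (j : Fin r) :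
    σ.orderEmbOfFin hσ.2 j = eastBefore σ (σ.orderEmbOfFin hσ.2 j) + j + 1 := by
  have hpos := (mem_Icc.1 (hσ.1 (σ.orderEmbOfFin_mem hσ.2 j))).1
  have := eastBefore_add_card_filter_lt hσ.zero_notMem hpos
  rw [card_filter_lt_orderEmbOfFin] at this
  exact this.symm

theorem lt_pathHeight_iff (hσ : IsLatticePath n r σ) (j : Fin r) (k : ℕ) :
    (j : ℕ) < pathHeight σ k ↔ σ.orderEmbOfFin hσ.2 j ≤ k + j + 1 := by
  have hanti : Antitone (eastBefore σ · ≤ k) := fun _ _ hab h => (eastBefore_mono σ hab).trans h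
  rw [pathHeight_eq_card, lt_card_filter_iff hσ.2 hanti]
  have := hσ.orderEmbOfFin_north j
  omega

theorem orderEmbOfFin_east (hσ : IsLatticePath n r σ) (k : Fin n) :
    (Icc 1 (n + r) \ σ).orderEmbOfFin hσ.card_Icc_sdiff k = pathHeight σ k + k + 1 := by
  set e := (Icc 1 (n + r) \ σ).orderEmbOfFin hσ.card_Icc_sdiff k with he
  obtain ⟨hIcc, heσ⟩ := mem_sdiff.1 (orderEmbOfFin_mem _ hσ.card_Icc_sdiff k)
  rw [← he] at hIcc heσ
  have heast : eastBefore σ e = k := by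
    rw [← card_filter_lt_orderEmbOfFin hσ.card_Icc_sdiff k, ← he, eastBefore]
    congr 1
    ext b
    simp only [mem_filter, mem_Icc, mem_sdiff] at hIcc ⊢
    grind
  have := eastBefore_add_card_filter_lt hσ.zero_notMem (mem_Icc.1 hIcc).1
  rw [← pathHeight_eastBefore heσ (mem_Icc.1 hIcc).1, heast] at this
  omega

theorem eastHeight_eq_pathHeight (hσ : IsLatticePath n r σ) {k : ℕ} (hk : k < n) :
    eastHeight n r σ k = pathHeight σ k := by
  have heast : ((Icc 1 (n + r) \ σ).sort (· ≤ ·)).getD k 0 = pathHeight σ k + k + 1 := by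
    rw [List.getD_eq_getElem _ _ (by simpa [hσ.card_Icc_sdiff] using hk)]
    exact hσ.orderEmbOfFin_east ⟨k, hk⟩
  rw [eastHeight, heast]
  omega

theorem pathOfHeight_pathHeight (hσ : IsLatticePath n r σ) :
    pathOfHeight n r (pathHeight σ) = σ := by
  have heast : ((range n).image fun k => pathHeight σ k + k + 1) = Icc 1 (n + r) \ σ := by
    ext a
    rw [← image_orderEmbOfFin_univ _ hσ.card_Icc_sdiff]
    simp only [mem_image, mem_range, mem_univ, true_and, hσ.orderEmbOfFin_east, Fin.exists_iff,
      exists_prop]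
  rw [pathOfHeight, heast, Finset.sdiff_sdiff_eq_self hσ.1]

theorem pathAbove_iff_orderEmbOfFin_le (hσ : IsLatticePath n r σ) (hτ : IsLatticePath n r τ) :
    PathAbove σ τ ↔ ∀ j, σ.orderEmbOfFin hσ.2 j ≤ τ.orderEmbOfFin hτ.2 j := by
  refine ⟨fun h j => h j (by simp [hσ.2]) (by simp [hτ.2]), fun h j hjσ _ => ?_⟩
  exact h ⟨j, by simpa [hσ.2] using hjσ⟩

theorem pathAbove_iff_pathHeight_le (hσ : IsLatticePath n r σ) (hτ : IsLatticePath n r τ) :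
    PathAbove σ τ ↔ pathHeight τ ≤ pathHeight σ := by
  rw [hσ.pathAbove_iff_orderEmbOfFin_le hτ]
  refine ⟨fun h k => le_of_forall_lt fun j hj => ?_, fun h j => ?_⟩
  · have hjr : j < r := hj.trans_le (hτ.isHeightFunction_pathHeight.le k)
    have hτj := (hτ.lt_pathHeight_iff ⟨j, hjr⟩ k).1 hj
    exact (hσ.lt_pathHeight_iff ⟨j, hjr⟩ k).2 ((h ⟨j, hjr⟩).trans hτj)
  · rw [hτ.orderEmbOfFin_north j, ← hσ.lt_pathHeight_iff]
    exact ((hτ.lt_pathHeight_iff j _).2 (hτ.orderEmbOfFin_north j).le).trans_le (h _)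

end IsLatticePath

namespace IsHeightFunction

theorem strictMono_add (hf : IsHeightFunction n r f) : StrictMono fun k => f k + k + 1 :=
  (hf.1.add_strictMono strictMono_id).add_const 1

theorem image_subset_Icc (hf : IsHeightFunction n r f) :
    ((range n).image fun k => f k + k + 1) ⊆ Icc 1 (n + r) := by
  refine image_subset_iff.2 fun k hk => mem_Icc.2 ?_
  have := hf.le k
  have := mem_range.1 hk
  omega

theorem isLatticePath_pathOfHeight (hf : IsHeightFunction n r f) :
    IsLatticePath n r (pathOfHeight n r f) := by
  refine ⟨sdiff_subset, ?_⟩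
  rw [pathOfHeight, card_sdiff_of_subset hf.image_subset_Icc, Nat.card_Icc,
    card_image_of_injective _ hf.strictMono_add.injective, card_range]
  omega

theorem pathHeight_pathOfHeight (hf : IsHeightFunction n r f) :
    pathHeight (pathOfHeight n r f) = f := by
  have hσ := hf.isLatticePath_pathOfHeight
  ext k
  rcases lt_or_ge k n with hk | hk
  · have hmem (i : Fin n) : f i + i + 1 ∈ Icc 1 (n + r) \ pathOfHeight n r f := by
      rw [pathOfHeight, Finset.sdiff_sdiff_eq_self hf.image_subset_Icc]
      exact mem_image_of_mem (fun k => f k + k + 1) (mem_range.2 i.2)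
    have hunique := orderEmbOfFin_unique hσ.card_Icc_sdiff hmem fun _ _ h => hf.strictMono_add h
    have heast : f k + k + 1 = pathHeight (pathOfHeight n r f) k + k + 1 :=
      (congrFun hunique ⟨k, hk⟩).trans (hσ.orderEmbOfFin_east ⟨k, hk⟩)
    omega
  · rw [hσ.pathHeight_of_le hk, hf.2 k hk]

end IsHeightFunction

/-! ### Thin vertices -/

variable {V W : Multiset (Finset ℕ)}

theorem sum_map_pathHeight_apply_of_le (hV : ∀ σ ∈ V, IsLatticePath n r σ) {k : ℕ} (hk : n ≤ k) :
    (V.map pathHeight).sum k = V.card * r := by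
  have hconst : V.map (fun σ => pathHeight σ k) = V.map fun _ => r :=
    Multiset.map_congr rfl fun σ hσ => (hV σ hσ).pathHeight_of_le hk
  simpa [Pi.multiset_sum_apply] using congrArg Multiset.sum hconst

theorem card_eq_card_of_sum_pathMonomial_eq (hr : 0 < r) (hV : ∀ σ ∈ V, IsLatticePath n r σ)
    (hW : ∀ σ ∈ W, IsLatticePath n r σ)
    (hVW : (V.map pathMonomial).sum = (W.map pathMonomial).sum) : V.card = W.card := by
  refine Nat.eq_of_mul_eq_mul_right hr ?_
  rw [← sum_map_pathHeight_apply_of_le hV le_rfl, ← sum_map_pathHeight_apply_of_le hW le_rfl,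
    sum_map_pathHeight, hVW, sum_map_pathHeight]

theorem thinV_iff_isThin (hV : ∀ σ ∈ V, IsLatticePath n r σ) :
    ThinV n r V ↔ IsThin (V.map pathHeight) := by
  have chain : (∀ σ ∈ V, ∀ τ ∈ V, PathAbove σ τ ∨ PathAbove τ σ) ↔
      ∀ σ ∈ V, ∀ τ ∈ V, pathHeight σ ≤ pathHeight τ ∨ pathHeight τ ≤ pathHeight σ :=
    forall₂_congr fun σ hσ => forall₂_congr fun τ hτ => by
      rw [(hV σ hσ).pathAbove_iff_pathHeight_le (hV τ hτ),
        (hV τ hτ).pathAbove_iff_pathHeight_le (hV σ hσ), or_comm]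
  have level : (∀ σ ∈ V, ∀ τ ∈ V, ∀ k < n, eastHeight n r σ k ≤ eastHeight n r τ k + 1) ↔
      ∀ σ ∈ V, ∀ τ ∈ V, ∀ k, pathHeight σ k ≤ pathHeight τ k + 1 :=
    forall₂_congr fun σ hσ => forall₂_congr fun τ hτ => forall_congr' fun k => by
      rcases lt_or_ge k n with hk | hk
      · simp only [hk, forall_const, (hV σ hσ).eastHeight_eq_pathHeight hk,
          (hV τ hτ).eastHeight_eq_pathHeight hk]
      · simp [hk.not_gt, (hV σ hσ).pathHeight_of_le hk, (hV τ hτ).pathHeight_of_le hk]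
  simp only [ThinV, IsThin, chain, level, Multiset.forall_mem_map_iff]

theorem map_pathOfHeight_map_pathHeight (hV : ∀ σ ∈ V, IsLatticePath n r σ) :
    (V.map pathHeight).map (pathOfHeight n r) = V := by
  rw [Multiset.map_map]
  exact (Multiset.map_congr rfl fun σ hσ => (hV σ hσ).pathOfHeight_pathHeight).trans V.map_id

theorem isHeightFunction_of_mem_leveling {F : Multiset (ℕ → ℕ)}
    (hF : ∀ g ∈ F, IsHeightFunction n r g) (hf : f ∈ leveling F) : IsHeightFunction n r f :=
  ⟨monotone_of_mem_leveling (fun g hg => (hF g hg).1) hf, fun k hk => le_antisymm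
    (le_of_mem_leveling (fun g hg => ((hF g hg).2 k hk).le) hf)
    (ge_of_mem_leveling (fun g hg => ((hF g hg).2 k hk).ge) hf)⟩

/-- The vertex obtained from `V` by leveling its height functions: it turns out to be the thin
vertex of the graph `G(μ)` containing `V`. -/
noncomputable def thinning (n r : ℕ) (V : Multiset (Finset ℕ)) : Multiset (Finset ℕ) :=
  (leveling (V.map pathHeight)).map (pathOfHeight n r)

theorem isHeightFunction_of_mem_leveling_map_pathHeight (hV : ∀ σ ∈ V, IsLatticePath n r σ)
    (hf : f ∈ leveling (V.map pathHeight)) : IsHeightFunction n r f :=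
  isHeightFunction_of_mem_leveling
    (Multiset.forall_mem_map_iff.2 fun σ hσ => (hV σ hσ).isHeightFunction_pathHeight) hf

theorem isLatticePath_of_mem_thinning (hV : ∀ σ ∈ V, IsLatticePath n r σ)
    (hσ : σ ∈ thinning n r V) : IsLatticePath n r σ := by
  obtain ⟨f, hf, rfl⟩ := Multiset.mem_map.1 hσ
  exact (isHeightFunction_of_mem_leveling_map_pathHeight hV hf).isLatticePath_pathOfHeight

theorem map_pathHeight_thinning (hV : ∀ σ ∈ V, IsLatticePath n r σ) :
    (thinning n r V).map pathHeight = leveling (V.map pathHeight) := by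
  rw [thinning, Multiset.map_map]
  refine (Multiset.map_congr rfl fun f hf => ?_).trans (Multiset.map_id _)
  exact (isHeightFunction_of_mem_leveling_map_pathHeight hV hf).pathHeight_pathOfHeight

theorem pathHeight_mem_leveling_of_mem_thinning (hV : ∀ σ ∈ V, IsLatticePath n r σ)
    (hσ : σ ∈ thinning n r V) : pathHeight σ ∈ leveling (V.map pathHeight) :=
  map_pathHeight_thinning hV ▸ Multiset.mem_map_of_mem pathHeight hσ

theorem pathAbove_of_mem_thinning_right (hα : IsLatticePath n r α)
    (hV : ∀ σ ∈ V, IsLatticePath n r σ) (hVα : ∀ σ ∈ V, PathAbove α σ)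
    (hσ : σ ∈ thinning n r V) : PathAbove α σ := by
  rw [hα.pathAbove_iff_pathHeight_le (isLatticePath_of_mem_thinning hV hσ)]
  refine fun k => le_of_mem_leveling (Multiset.forall_mem_map_iff.2 fun τ hτ => ?_)
    (pathHeight_mem_leveling_of_mem_thinning hV hσ)
  exact (hα.pathAbove_iff_pathHeight_le (hV τ hτ)).1 (hVα τ hτ) k

theorem pathAbove_of_mem_thinning_left (hω : IsLatticePath n r ω)
    (hV : ∀ σ ∈ V, IsLatticePath n r σ) (hVω : ∀ σ ∈ V, PathAbove σ ω)
    (hσ : σ ∈ thinning n r V) : PathAbove σ ω := by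
  rw [(isLatticePath_of_mem_thinning hV hσ).pathAbove_iff_pathHeight_le hω]
  refine fun k => ge_of_mem_leveling (Multiset.forall_mem_map_iff.2 fun τ hτ => ?_)
    (pathHeight_mem_leveling_of_mem_thinning hV hσ)
  exact ((hV τ hτ).pathAbove_iff_pathHeight_le hω).1 (hVω τ hτ) k

theorem sum_map_pathMonomial_thinning (hV : ∀ σ ∈ V, IsLatticePath n r σ) :
    ((thinning n r V).map pathMonomial).sum = (V.map pathMonomial).sum := by
  apply partialSums_injective
  rw [← sum_map_pathHeight, ← sum_map_pathHeight, map_pathHeight_thinning hV, sum_leveling]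

theorem thinV_thinning (hV : ∀ σ ∈ V, IsLatticePath n r σ) : ThinV n r (thinning n r V) := by
  rw [thinV_iff_isThin fun σ => isLatticePath_of_mem_thinning hV, map_pathHeight_thinning hV]
  exact isThin_leveling _

theorem ThinV.eq_thinning (hr : 0 < r) (hW : ∀ σ ∈ W, IsLatticePath n r σ) (hthin : ThinV n r W)
    (hV : ∀ σ ∈ V, IsLatticePath n r σ)
    (hWV : (W.map pathMonomial).sum = (V.map pathMonomial).sum) : W = thinning n r V := by
  have hcard : (W.map pathHeight).card = (V.map pathHeight).card := by
    simpa using card_eq_card_of_sum_pathMonomial_eq hr hW hV hWV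
  have hsum : (W.map pathHeight).sum = (V.map pathHeight).sum := by
    rw [sum_map_pathHeight, hWV, sum_map_pathHeight]
  calc
    W = (W.map pathHeight).map (pathOfHeight n r) := (map_pathOfHeight_map_pathHeight hW).symm
    _ = (leveling (W.map pathHeight)).map (pathOfHeight n r) := by
      rw [((thinV_iff_isThin hW).1 hthin).leveling_eq]
    _ = thinning n r V := by rw [leveling_congr hcard hsum, thinning]

end LatticePaths

/-- If the symmetric exchange graph `G(μ)` of the lattice path polymatroid
`Γ(α,ω)` is nonempty, it has exactly one thin vertex. -/
theorem stmt7 (n r : ℕ) (hn : 0 < n) (hr : 0 < r) (α ω : Finset ℕ)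
    (hα : IsLatticePath n r α) (hω : IsLatticePath n r ω) (hαω : PathAbove α ω)
    (μ : ℕ →₀ ℕ)
    (hne : ∃ V : Multiset (Finset ℕ),
      (∀ σ ∈ V, IsLatticePath n r σ ∧ PathAbove α σ ∧ PathAbove σ ω) ∧
      (V.map pathMonomial).sum = μ) :
    ∃! V : Multiset (Finset ℕ),
      (∀ σ ∈ V, IsLatticePath n r σ ∧ PathAbove α σ ∧ PathAbove σ ω) ∧
      (V.map pathMonomial).sum = μ ∧ ThinV n r V := by
  obtain ⟨V, hV, rfl⟩ := hne
  have hpath : ∀ σ ∈ V, IsLatticePath n r σ := fun σ hσ => (hV σ hσ).1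
  refine ⟨thinning n r V, ⟨fun σ hσ => ⟨?_, ?_, ?_⟩, ?_, ?_⟩, ?_⟩
  · exact isLatticePath_of_mem_thinning hpath hσ
  · exact pathAbove_of_mem_thinning_right hα hpath (fun τ hτ => (hV τ hτ).2.1) hσ
  · exact pathAbove_of_mem_thinning_left hω hpath (fun τ hτ => (hV τ hτ).2.2) hσ
  · exact sum_map_pathMonomial_thinning hpath
  · exact thinV_thinning hpath
  · rintro W ⟨hW, hWV, hthin⟩
    exact hthin.eq_thinning hr (fun σ hσ => (hW σ hσ).1) hpath hWV
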